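/- arXiv:1601.06636 — 2 statements merged into one kernel-verified Lean document; each statement's English description precedes it below -/
import Mathlib

section
/- The backstepping transformation maps the plant into the target system: Suppose Λʳ, Λˡ are C¹ diagonal matrix functions on [0,1] with positive entries, Sʳ, Sˡ, Sᵒ are continuous, Q₀ ∈ ℝ^{n×m}, the kernels G₂₁: 𝕋 → ℝ^{m×n} and G₂₂: 𝕋 → ℝ^{m×m} are C¹ and satisfy the kernel equations (K1), (K2) and boundary conditions (B1), (B2), and Cʳ: 𝕋 → ℝ^{n×n}, Cˡ: 𝕋 → ℝ^{n×m} are continuous and satisfy Cʳ(x,ξ) = Sˡ(x)G₂₁(x,ξ) + ∫_ξˣ Cˡ(x,η)G₂₁(η,ξ)dη and Cˡ(x,ξ) = Sˡ(x)G₂₂(x,ξ) + ∫_ξˣ Cˡ(x,η)G₂₂(η,ξ)dη. Let (u, v) be a classical C¹ solution of the plant system satisfying u(t,0) = Q₀v(t,0), and define ε(t,x) := u(t,x) and β(t,x) := v(t,x) − ∫₀ˣ [G₂₁(x,ξ)u(t,ξ) + G₂₂(x,ξ)v(t,ξ)] dξ. Then (ε, β) is a classical solution of the target system, i.e. ∂ₜε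 + Λʳ(x)∂ₓε = Sʳ(x)ε + Sˡ(x)β + ∫₀ˣ Cʳ(x,ξ)ε(t,ξ)dξ + ∫₀ˣ Cˡ(x,ξ)β(t,ξ)dξ and ∂ₜβ − Λˡ(x)∂ₓβ = Δ(x)β(t,0) with Δ(x) := G₂₂(x,0)Λˡ(0) − G₂₁(x,0)Λʳ(0)Q₀, and ε(t,0) = Q₀β(t,0). -/
open MeasureTheory Set Matrix Real

/-!
Write `𝒱 G w` for the Volterra integral `∫₀ˣ G(x, ξ) w(ξ) dξ`, so that `β = v - 𝒱 G₂₁ u - 𝒱 G₂₂ v`.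

The relations for `Cʳ` and `Cˡ` say that `𝒱 Cʳ u = Sˡ 𝒱 G₂₁ u + 𝒱 Cˡ (𝒱 G₂₁ u)` and
`𝒱 Cˡ v = Sˡ 𝒱 G₂₂ v + 𝒱 Cˡ (𝒱 G₂₂ v)`, because Volterra operators compose by composing their
kernels (Fubini on the triangle). Adding the two gives `Sˡ v = Sˡ β + 𝒱 Cʳ u + 𝒱 Cˡ β`, which turns
the first plant equation into the first target equation.

For the second equation, differentiate `β` under the integral sign. By (K1), (K2) and the plant
equations, the interior terms of `∂ₜβ - Λˡ ∂ₓβ` are exactly the `ξ`-derivative of the flux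
`G₂₁(x, ξ) Λʳ(ξ) u(t, ξ) - G₂₂(x, ξ) Λˡ(ξ) v(t, ξ)`. They therefore integrate to boundary values:
those at `ξ = x` cancel by (B1) and (B2), and those at `ξ = 0` form `Δ(x) β(t, 0)`.
-/

namespace Backstepping

section Analysis

variable {E : Type*} [NormedAddCommGroup E] [NormedSpace ℝ E] {a b : ℝ}

/-- The closed triangle `a ≤ ξ ≤ x ≤ b` of pairs `(x, ξ)`, the domain of Volterra kernels on
`[a, b]`; the triangle `𝕋` of the paper is `triangle 0 1`. -/
def triangle (a b : ℝ) : Set (ℝ × ℝ) := {p | a ≤ p.2 ∧ p.2 ≤ p.1 ∧ p.1 ≤ b}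

theorem isCompact_triangle : IsCompact (triangle a b) := by
  refine (isCompact_Icc.prod isCompact_Icc : IsCompact (Icc a b ×ˢ Icc a b)).of_isClosed_subset
    ?_ fun p hp => ⟨⟨hp.1.trans hp.2.1, hp.2.2⟩, hp.1, hp.2.1.trans hp.2.2⟩
  exact (isClosed_le continuous_const continuous_snd).inter
    ((isClosed_le continuous_snd continuous_fst).inter
      (isClosed_le continuous_fst continuous_const))

theorem triangle_subset_triangle_right {c : ℝ} (h : c ≤ b) : triangle a c ⊆ triangle a b :=
  fun _ hp => ⟨hp.1, hp.2.1, hp.2.2.trans h⟩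

section Sections

variable {X : Type*} [TopologicalSpace X] {f : ℝ → ℝ → X}

theorem continuousOn_triangle_fst (hf : ContinuousOn (Function.uncurry f) (triangle a b))
    {ξ : ℝ} (hξ : a ≤ ξ) : ContinuousOn (fun x => f x ξ) (Icc ξ b) :=
  hf.comp (f := fun x => (x, ξ)) (by fun_prop) fun _ hx => ⟨hξ, hx⟩

theorem continuousOn_triangle_snd (hf : ContinuousOn (Function.uncurry f) (triangle a b))
    {x : ℝ} (hx : x ≤ b) : ContinuousOn (f x) (Icc a x) :=
  hf.comp (f := fun ξ => (x, ξ)) (by fun_prop) fun _ hξ => ⟨hξ.1, hξ.2, hx⟩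

theorem continuousOn_triangle_diagonal (hf : ContinuousOn (Function.uncurry f) (triangle a b)) :
    ContinuousOn (fun x => f x x) (Icc a b) :=
  hf.comp (f := fun x => (x, x)) (by fun_prop) fun _ hx => ⟨hx.1, le_rfl, hx.2⟩

end Sections

theorem continuousOn_integral_of_continuousOn_region {X : Type*} [TopologicalSpace X]
    [FirstCountableTopology X] {s : Set X} {φ : X → ℝ} {f : X → ℝ → E}
    (hφ : ContinuousOn φ s) (haφ : ∀ x ∈ s, a ≤ φ x)
    (hf : ContinuousOn (Function.uncurry f) {p | p.1 ∈ s ∧ p.2 ∈ Icc a (φ p.1)}) :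
    ContinuousOn (fun x => ∫ ξ in a..φ x, f x ξ) s := by
  rw [continuousOn_iff_continuous_domRestrict] at hφ ⊢
  -- Clamping `ξ` to `[a, φ x]` extends `f` continuously to all real `ξ`.
  have hclamp : Continuous (Function.uncurry fun (x : s) ξ => f x (max a (min ξ (φ x)))) :=
    hf.comp_continuous (f := fun p : s × ℝ => ((p.1 : X), max a (min p.2 (φ p.1))))
      (Continuous.prodMk (by fun_prop) (continuous_const.max
        (continuous_snd.min (hφ.comp continuous_fst))))
      fun p => ⟨p.1.2, le_max_left _ _, max_le (haφ _ p.1.2) (min_le_right _ _)⟩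
  refine (intervalIntegral.continuous_parametric_intervalIntegral_of_continuous
    (μ := volume) (a₀ := a) hclamp hφ).congr fun x => ?_
  refine intervalIntegral.integral_congr_Ioo_of_le (haφ x x.2) fun ξ hξ => ?_
  have hξφ : ξ ≤ φ x := hξ.2.le
  exact congrArg (f x) (by rw [min_eq_left hξφ, max_eq_right hξ.1.le])

theorem integral_indicator_Icc {f : ℝ → E} (hab : a ≤ b) :
    ∫ x, (Icc a b).indicator f x = ∫ x in a..b, f x := by
  rw [integral_indicator measurableSet_Icc, integral_Icc_eq_integral_Ioc,
    intervalIntegral.integral_of_le hab]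

theorem integral_integral_swap_triangle {f : ℝ → ℝ → E} (hab : a ≤ b)
    (hf : IntegrableOn (Function.uncurry f) (triangle a b)) :
    ∫ x in a..b, ∫ ξ in a..x, f x ξ = ∫ ξ in a..b, ∫ x in ξ..b, f x ξ := by
  let F : ℝ × ℝ → E := (triangle a b).indicator (Function.uncurry f)
  have hfst (x : ℝ) : ∫ ξ, F (x, ξ) = (Icc a b).indicator (fun x => ∫ ξ in a..x, f x ξ) x := by
    by_cases hx : x ∈ Icc a b
    · rw [indicator_of_mem hx, ← integral_indicator_Icc hx.1]
      refine integral_congr_ae (.of_forall fun ξ => ?_)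
      simp only [F, indicator, triangle, mem_ofPred_eq, mem_Icc, hx.2, and_true,
        Function.uncurry_apply_pair]
    · rw [indicator_of_notMem hx]
      refine integral_eq_zero_of_ae (.of_forall fun ξ => indicator_of_notMem (fun hp => hx ?_) _)
      exact ⟨hp.1.trans hp.2.1, hp.2.2⟩
  have hsnd (ξ : ℝ) : ∫ x, F (x, ξ) = (Icc a b).indicator (fun ξ => ∫ x in ξ..b, f x ξ) ξ := by
    by_cases hξ : ξ ∈ Icc a b
    · rw [indicator_of_mem hξ, ← integral_indicator_Icc hξ.2]
      refine integral_congr_ae (.of_forall fun x => ?_)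
      simp only [F, indicator, triangle, mem_ofPred_eq, mem_Icc, hξ.1, true_and,
        Function.uncurry_apply_pair]
    · rw [indicator_of_notMem hξ]
      refine integral_eq_zero_of_ae (.of_forall fun x => indicator_of_notMem (fun hp => hξ ?_) _)
      exact ⟨hp.1, hp.2.1.trans hp.2.2⟩
  have hF : Integrable (Function.uncurry fun x ξ => F (x, ξ)) (volume.prod volume) :=
    (integrable_indicator_iff isCompact_triangle.measurableSet).2 hf
  have hswap := integral_integral_swap hF
  simp only [hfst, hsnd] at hswap
  rwa [integral_indicator_Icc hab, integral_indicator_Icc hab] at hswap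

variable [CompleteSpace E]

theorem integral_eq_sub_of_hasDerivWithinAt {f f' : ℝ → E} (hab : a ≤ b)
    (hf : ∀ x ∈ Icc a b, HasDerivWithinAt f (f' x) (Icc a b) x)
    (hf' : IntervalIntegrable f' volume a b) : ∫ x in a..b, f' x = f b - f a :=
  intervalIntegral.integral_eq_sub_of_hasDerivAt_of_le hab
    (fun x hx => (hf x hx).continuousWithinAt)
    (fun x hx => (hf x (Ioo_subset_Icc_self hx)).hasDerivAt (Icc_mem_nhds hx.1 hx.2)) hf'

theorem hasDerivWithinAt_integral_Icc {f : ℝ → E} (hf : ContinuousOn f (Icc a b)) {x : ℝ}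
    (hx : x ∈ Icc a b) : HasDerivWithinAt (fun y => ∫ s in a..y, f s) (f x) (Icc a b) x :=
  haveI : Fact (x ∈ Icc a b) := ⟨hx⟩
  intervalIntegral.integral_hasDerivWithinAt_right
    ((hf.mono (Icc_subset_Icc_right hx.2)).intervalIntegrable_of_Icc hx.1)
    (hf.stronglyMeasurableAtFilter_nhdsWithin measurableSet_Icc x) (hf x hx)

theorem hasDerivWithinAt_integral_Ici {f : ℝ → E} (hf : ContinuousOn f (Ici a)) {x : ℝ}
    (hx : x ∈ Ici a) : HasDerivWithinAt (fun y => ∫ s in a..y, f s) (f x) (Ici a) x :=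
  (hasDerivWithinAt_integral_Icc (b := x + 1) (hf.mono Icc_subset_Ici_self)
    ⟨hx, (lt_add_one x).le⟩).mono_of_mem_nhdsWithin
    (Ici_inter_Iic (a := a) ▸ inter_mem_nhdsWithin _ (Iic_mem_nhds (lt_add_one x)))

theorem integral_triangle_eq_of_hasDerivWithinAt {f f' : ℝ → ℝ → E}
    (hf : ContinuousOn (Function.uncurry f) (triangle a b))
    (hf' : ContinuousOn (Function.uncurry f') (triangle a b))
    (hderiv : ∀ x ξ, a ≤ ξ → ξ ≤ x → x ≤ b →
      HasDerivWithinAt (fun y => f y ξ) (f' x ξ) (Icc ξ b) x) (hab : a ≤ b) :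
    ∫ ξ in a..b, f b ξ = (∫ s in a..b, f s s) + ∫ s in a..b, ∫ ξ in a..s, f' s ξ := by
  rw [← sub_eq_iff_eq_add', ← intervalIntegral.integral_sub
      ((continuousOn_triangle_snd hf le_rfl).intervalIntegrable_of_Icc hab)
      ((continuousOn_triangle_diagonal hf).intervalIntegrable_of_Icc hab),
    integral_integral_swap_triangle hab (hf'.integrableOn_compact isCompact_triangle)]
  refine intervalIntegral.integral_congr_Ioo_of_le hab fun ξ hξ => ?_
  exact (integral_eq_sub_of_hasDerivWithinAt hξ.2.le
    (fun s hs => hderiv s ξ hξ.1.le hs.1 hs.2)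
    ((continuousOn_triangle_fst hf' hξ.1.le).intervalIntegrable_of_Icc hξ.2.le)).symm

theorem hasDerivWithinAt_integral_triangle {f f' : ℝ → ℝ → E}
    (hf : ContinuousOn (Function.uncurry f) (triangle a b))
    (hf' : ContinuousOn (Function.uncurry f') (triangle a b))
    (hderiv : ∀ x ξ, a ≤ ξ → ξ ≤ x → x ≤ b →
      HasDerivWithinAt (fun y => f y ξ) (f' x ξ) (Icc ξ b) x) {x : ℝ} (hx : x ∈ Icc a b) :
    HasDerivWithinAt (fun y => ∫ ξ in a..y, f y ξ) (f x x + ∫ ξ in a..x, f' x ξ)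
      (Icc a b) x := by
  have heq : ∀ y ∈ Icc a b, ∫ ξ in a..y, f y ξ
      = (∫ s in a..y, f s s) + ∫ s in a..y, ∫ ξ in a..s, f' s ξ := fun y hy =>
    integral_triangle_eq_of_hasDerivWithinAt
      (hf.mono (triangle_subset_triangle_right hy.2))
      (hf'.mono (triangle_subset_triangle_right hy.2))
      (fun s ξ haξ hξs hsy => (hderiv s ξ haξ hξs (hsy.trans hy.2)).mono
        (Icc_subset_Icc_right hy.2)) hy.1
  have hcont : ContinuousOn (fun s => ∫ ξ in a..s, f' s ξ) (Icc a b) :=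
    continuousOn_integral_of_continuousOn_region continuousOn_id (fun _ hs => hs.1)
      (hf'.mono fun _ hp => ⟨hp.2.1, hp.2.2, hp.1.2⟩)
  exact ((hasDerivWithinAt_integral_Icc (continuousOn_triangle_diagonal hf) hx).add
    (hasDerivWithinAt_integral_Icc hcont hx)).congr heq (heq x hx)

theorem hasDerivWithinAt_integral_Ici_prod_Icc {f f' : ℝ → ℝ → E} {c d : ℝ} (hcd : c ≤ d)
    (hf : ∀ t ∈ Ici a, ContinuousOn (f t) (Icc c d))
    (hf' : ContinuousOn (Function.uncurry f') (Ici a ×ˢ Icc c d))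
    (hderiv : ∀ t ∈ Ici a, ∀ ξ ∈ Icc c d,
      HasDerivWithinAt (fun s => f s ξ) (f' t ξ) (Ici a) t) {t : ℝ} (ht : t ∈ Ici a) :
    HasDerivWithinAt (fun s => ∫ ξ in c..d, f s ξ) (∫ ξ in c..d, f' t ξ) (Ici a) t := by
  have heq : ∀ s ∈ Ici a, ∫ ξ in c..d, f s ξ
      = (∫ ξ in c..d, f a ξ) + ∫ r in a..s, ∫ ξ in c..d, f' r ξ := by
    intro s hs
    rw [← sub_eq_iff_eq_add', ← intervalIntegral.integral_sub
        ((hf s hs).intervalIntegrable_of_Icc hcd)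
        ((hf a self_mem_Ici).intervalIntegrable_of_Icc hcd),
      intervalIntegral_intervalIntegral_swap]
    · refine intervalIntegral.integral_congr_Ioo_of_le hcd fun ξ hξ => ?_
      have hξ' := Ioo_subset_Icc_self hξ
      refine (integral_eq_sub_of_hasDerivWithinAt (f := fun r => f r ξ) hs (fun r hr =>
        (hderiv r hr.1 ξ hξ').mono Icc_subset_Ici_self) ?_).symm
      exact (hf'.comp (f := fun r => (r, ξ)) (by fun_prop)
        fun r hr => ⟨hr.1, hξ'⟩).intervalIntegrable_of_Icc hs
    · rw [uIoc_of_le hs, uIoc_of_le hcd]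
      exact ((hf'.mono (prod_mono_left Icc_subset_Ici_self)).integrableOn_compact
        (isCompact_Icc.prod isCompact_Icc)).mono_set
        (prod_mono Ioc_subset_Icc_self Ioc_subset_Icc_self)
  have hcont : ContinuousOn (fun r => ∫ ξ in c..d, f' r ξ) (Ici a) :=
    continuousOn_integral_of_continuousOn_region continuousOn_const (fun _ _ => hcd) hf'
  exact ((hasDerivWithinAt_integral_Ici hcont ht).const_add _).congr heq (heq t ht)

end Analysis

section MulVec

variable {ι κ : Type*} [Fintype ι]

theorem continuousOn_mulVec {X : Type*} [TopologicalSpace X] {s : Set X} {A : X → Matrix κ ι ℝ}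
    {w : X → ι → ℝ} (hA : ContinuousOn A s) (hw : ContinuousOn w s) :
    ContinuousOn (fun x => A x *ᵥ w x) s :=
  (continuous_fst.matrix_mulVec continuous_snd).comp_continuousOn (hA.prodMk hw)

theorem continuousOn_matrix_mul {X ν : Type*} [TopologicalSpace X] {s : Set X}
    {A : X → Matrix κ ι ℝ} {B : X → Matrix ι ν ℝ} (hA : ContinuousOn A s)
    (hB : ContinuousOn B s) : ContinuousOn (fun x => A x * B x) s :=
  (continuous_fst.matrix_mul continuous_snd).comp_continuousOn (hA.prodMk hB)

theorem hasDerivWithinAt_diagonal_apply [DecidableEq κ] {d : κ → ℝ → ℝ} {d' : κ → ℝ}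
    {s : Set ℝ} {x : ℝ} (hd : ∀ i, HasDerivWithinAt (d i) (d' i) s x) (i j : κ) :
    HasDerivWithinAt (fun y => diagonal (fun k => d k y) i j) (diagonal d' i j) s x := by
  obtain rfl | hij := eq_or_ne i j
  · simpa only [diagonal_apply_eq] using hd i
  · simpa only [diagonal_apply_ne _ hij] using hasDerivWithinAt_const x s 0

theorem hasDerivWithinAt_mulVec {A : ℝ → Matrix κ ι ℝ} {A' : Matrix κ ι ℝ} {w : ℝ → ι → ℝ}
    {w' : ι → ℝ} {s : Set ℝ} {x : ℝ}
    (hA : ∀ i j, HasDerivWithinAt (fun y => A y i j) (A' i j) s x)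
    (hw : HasDerivWithinAt w w' s x) :
    HasDerivWithinAt (fun y => A y *ᵥ w y) (A' *ᵥ w x + A x *ᵥ w') s x := by
  rw [hasDerivWithinAt_pi] at hw ⊢
  intro i
  refine (HasDerivWithinAt.fun_sum fun j (_ : j ∈ Finset.univ) =>
    (hA i j).mul (hw j)).congr_deriv ?_
  simp only [Finset.sum_add_distrib, mulVec, dotProduct, Pi.add_apply]

variable [Fintype κ]

theorem intervalIntegrable_const_mulVec {w : ℝ → ι → ℝ} {a b : ℝ} (A : Matrix κ ι ℝ)
    (hw : IntervalIntegrable w volume a b) :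
    IntervalIntegrable (fun x => A *ᵥ w x) volume a b :=
  ⟨A.mulVecLin.toContinuousLinearMap.integrable_comp hw.1,
    A.mulVecLin.toContinuousLinearMap.integrable_comp hw.2⟩

theorem mulVec_intervalIntegral {w : ℝ → ι → ℝ} {a b : ℝ} (A : Matrix κ ι ℝ)
    (hw : IntervalIntegrable w volume a b) :
    A *ᵥ (∫ x in a..b, w x) = ∫ x in a..b, A *ᵥ w x :=
  (A.mulVecLin.toContinuousLinearMap.intervalIntegral_comp_comm hw).symm

theorem of_intervalIntegral_mulVec {A : ℝ → Matrix κ ι ℝ} {a b : ℝ} (hab : a ≤ b)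
    (hA : ContinuousOn A (Icc a b)) (w : ι → ℝ) :
    (Matrix.of fun i j => ∫ x in a..b, A x i j) *ᵥ w = ∫ x in a..b, A x *ᵥ w := by
  have hAw : IntervalIntegrable (fun x => A x *ᵥ w) volume a b :=
    (continuousOn_mulVec hA continuousOn_const).intervalIntegrable_of_Icc hab
  have hAij (i : κ) (j : ι) : IntervalIntegrable (fun x => A x i j * w j) volume a b :=
    (((continuous_id.matrix_elem i j).comp_continuousOn hA).mul
      continuousOn_const).intervalIntegrable_of_Icc hab
  ext i
  calc ∑ j, (∫ x in a..b, A x i j) * w j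
      = ∑ j, ∫ x in a..b, A x i j * w j := by
        simp only [intervalIntegral.integral_mul_const]
    _ = ∫ x in a..b, ∑ j, A x i j * w j :=
        (intervalIntegral.integral_finsetSum fun j _ => hAij i j).symm
    _ = (∫ x in a..b, A x *ᵥ w) i :=
        (ContinuousLinearMap.proj (R := ℝ) (φ := fun _ : κ => ℝ) i).intervalIntegral_comp_comm hAw

end MulVec

section Volterra

variable {ι κ ν : Type*} [Fintype ι] {b x : ℝ}

theorem continuousOn_kernel_mulVec {G : ℝ → ℝ → Matrix κ ι ℝ} {w : ℝ → ι → ℝ}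
    (hG : ContinuousOn (Function.uncurry G) (triangle 0 b)) (hw : ContinuousOn w (Icc 0 b)) :
    ContinuousOn (Function.uncurry fun x ξ => G x ξ *ᵥ w ξ) (triangle 0 b) :=
  continuousOn_mulVec hG
    (hw.comp continuousOn_snd fun _ hp => ⟨hp.1, hp.2.1.trans hp.2.2⟩)

variable [Fintype κ]

/-- The Volterra operator `w ↦ ∫₀ˣ G(x, ξ) w(ξ) dξ` with matrix kernel `G`. -/
noncomputable def volterra (G : ℝ → ℝ → Matrix κ ι ℝ) (w : ℝ → ι → ℝ) (x : ℝ) : κ → ℝ :=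
  ∫ ξ in (0 : ℝ)..x, G x ξ *ᵥ w ξ

theorem volterra_congr {G : ℝ → ℝ → Matrix κ ι ℝ} {w w' : ℝ → ι → ℝ} (hx : 0 ≤ x)
    (h : EqOn w w' (Icc 0 x)) : volterra G w x = volterra G w' x :=
  intervalIntegral.integral_congr_Ioo_of_le hx fun ξ hξ =>
    congrArg (G x ξ *ᵥ ·) (h (Ioo_subset_Icc_self hξ))

/-- The kernel `(C ⋆ G)(x, ξ) = ∫_ξˣ C(x, η) G(η, ξ) dη` of the composition of the Volterra
operators with kernels `C` and `G`; the matrix is integrated entrywise. -/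
noncomputable def volterraComp (C : ℝ → ℝ → Matrix ν κ ℝ) (G : ℝ → ℝ → Matrix κ ι ℝ) (x ξ : ℝ) :
    Matrix ν ι ℝ :=
  Matrix.of fun i j => ∫ η in ξ..x, (C x η * G η ξ) i j

variable {G : ℝ → ℝ → Matrix κ ι ℝ} {w : ℝ → ι → ℝ}

theorem intervalIntegrable_kernel_mulVec
    (hG : ContinuousOn (Function.uncurry G) (triangle 0 b)) (hw : ContinuousOn w (Icc 0 b))
    (hx : x ∈ Icc 0 b) : IntervalIntegrable (fun ξ => G x ξ *ᵥ w ξ) volume 0 x :=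
  (continuousOn_triangle_snd (continuousOn_kernel_mulVec hG hw)
    hx.2).intervalIntegrable_of_Icc hx.1

theorem continuousOn_volterra
    (hG : ContinuousOn (Function.uncurry G) (triangle 0 b)) (hw : ContinuousOn w (Icc 0 b)) :
    ContinuousOn (volterra G w) (Icc 0 b) :=
  continuousOn_integral_of_continuousOn_region continuousOn_id (fun _ hs => hs.1)
    ((continuousOn_kernel_mulVec hG hw).mono fun _ hp => ⟨hp.2.1, hp.2.2, hp.1.2⟩)

theorem volterra_sub {w' : ℝ → ι → ℝ} (hG : ContinuousOn (Function.uncurry G) (triangle 0 b))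
    (hw : ContinuousOn w (Icc 0 b)) (hw' : ContinuousOn w' (Icc 0 b)) (hx : x ∈ Icc 0 b) :
    volterra G (fun ξ => w ξ - w' ξ) x = volterra G w x - volterra G w' x := by
  simp only [volterra, mulVec_sub]
  exact intervalIntegral.integral_sub (intervalIntegrable_kernel_mulVec hG hw hx)
    (intervalIntegrable_kernel_mulVec hG hw' hx)

theorem hasDerivWithinAt_volterra {G' : ℝ → ℝ → Matrix κ ι ℝ}
    (hG : ContinuousOn (Function.uncurry G) (triangle 0 b))
    (hG' : ContinuousOn (Function.uncurry G') (triangle 0 b))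
    (hderiv : ∀ x ξ, 0 ≤ ξ → ξ ≤ x → x ≤ b → ∀ i j,
      HasDerivWithinAt (fun y => G y ξ i j) (G' x ξ i j) (Icc ξ b) x)
    (hw : ContinuousOn w (Icc 0 b)) (hx : x ∈ Icc 0 b) :
    HasDerivWithinAt (volterra G w) (G x x *ᵥ w x + volterra G' w x) (Icc 0 b) x := by
  refine hasDerivWithinAt_integral_triangle (continuousOn_kernel_mulVec hG hw)
    (continuousOn_kernel_mulVec hG' hw) (fun y ξ h0 h1 h2 => ?_) hx
  simpa only [mulVec_zero, add_zero] using
    hasDerivWithinAt_mulVec (hderiv y ξ h0 h1 h2) (hasDerivWithinAt_const y (Icc ξ b) (w ξ))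

theorem hasDerivWithinAt_volterra_time {u ut : ℝ → ℝ → ι → ℝ}
    (hG : ContinuousOn (Function.uncurry G) (triangle 0 b))
    (hu : ∀ t ∈ Ici (0 : ℝ), ContinuousOn (u t) (Icc 0 b))
    (hut : ContinuousOn (Function.uncurry ut) (Ici 0 ×ˢ Icc 0 b))
    (hderiv : ∀ t ∈ Ici (0 : ℝ), ∀ ξ ∈ Icc 0 b,
      HasDerivWithinAt (fun s => u s ξ) (ut t ξ) (Ici 0) t)
    {t : ℝ} (ht : t ∈ Ici 0) (hx : x ∈ Icc 0 b) :
    HasDerivWithinAt (fun s => volterra G (u s) x) (volterra G (ut t) x) (Ici 0) t := by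
  have hsub : Icc 0 x ⊆ Icc 0 b := Icc_subset_Icc_right hx.2
  have hGx : ContinuousOn (G x) (Icc 0 x) := continuousOn_triangle_snd hG hx.2
  refine hasDerivWithinAt_integral_Ici_prod_Icc (f' := fun s ξ => G x ξ *ᵥ ut s ξ) hx.1
    (fun s hs => continuousOn_mulVec hGx ((hu s hs).mono hsub))
    (continuousOn_mulVec (hGx.comp continuousOn_snd fun _ hp => hp.2)
      (hut.mono (prod_mono_right hsub))) (fun s hs ξ hξ => ?_) ht
  simpa only [zero_mulVec, zero_add] using
    hasDerivWithinAt_mulVec (A' := 0) (fun i j => hasDerivWithinAt_const s (Ici 0) (G x ξ i j))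
      (hderiv s hs ξ (hsub hξ))

variable [Fintype ν] {C : ℝ → ℝ → Matrix ν κ ℝ}

theorem volterra_volterra (hC : ContinuousOn (Function.uncurry C) (triangle 0 b))
    (hG : ContinuousOn (Function.uncurry G) (triangle 0 b)) (hw : ContinuousOn w (Icc 0 b))
    (hx : x ∈ Icc 0 b) : volterra C (volterra G w) x = volterra (volterraComp C G) w x := by
  have hCx : ContinuousOn (C x) (Icc 0 x) := continuousOn_triangle_snd hC hx.2
  have hGw := (continuousOn_kernel_mulVec hG hw).mono (triangle_subset_triangle_right hx.2)
  have hCGw : ContinuousOn (Function.uncurry fun s ξ => C x s *ᵥ (G s ξ *ᵥ w ξ))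
      (triangle 0 x) :=
    continuousOn_mulVec
      (hCx.comp continuousOn_fst fun _ hp => ⟨hp.1.trans hp.2.1, hp.2.2⟩) hGw
  calc ∫ s in (0 : ℝ)..x, C x s *ᵥ ∫ ξ in (0 : ℝ)..s, G s ξ *ᵥ w ξ
      = ∫ s in (0 : ℝ)..x, ∫ ξ in (0 : ℝ)..s, C x s *ᵥ (G s ξ *ᵥ w ξ) :=
        intervalIntegral.integral_congr_Ioo_of_le hx.1 fun s hs =>
          mulVec_intervalIntegral _
            ((continuousOn_triangle_snd hGw hs.2.le).intervalIntegrable_of_Icc hs.1.le)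
    _ = ∫ ξ in (0 : ℝ)..x, ∫ s in ξ..x, C x s *ᵥ (G s ξ *ᵥ w ξ) :=
        integral_integral_swap_triangle hx.1 (hCGw.integrableOn_compact isCompact_triangle)
    _ = ∫ ξ in (0 : ℝ)..x, volterraComp C G x ξ *ᵥ w ξ := by
        refine intervalIntegral.integral_congr_Ioo_of_le hx.1 fun ξ hξ => ?_
        have hGξ : ContinuousOn (fun s => G s ξ) (Icc ξ x) :=
          (continuousOn_triangle_fst hG hξ.1.le).mono (Icc_subset_Icc_right hx.2)
        have hCG := continuousOn_matrix_mul (hCx.mono (Icc_subset_Icc_left hξ.1.le)) hGξ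
        simpa only [volterraComp, mulVec_mulVec] using
          (of_intervalIntegral_mulVec hξ.2.le hCG (w ξ)).symm

theorem volterra_eq_of_resolvent_relation {K : ℝ → ℝ → Matrix ν ι ℝ} {S : Matrix ν κ ℝ}
    (hK : ContinuousOn (Function.uncurry K) (triangle 0 b))
    (hC : ContinuousOn (Function.uncurry C) (triangle 0 b))
    (hG : ContinuousOn (Function.uncurry G) (triangle 0 b)) (hw : ContinuousOn w (Icc 0 b))
    (hx : x ∈ Icc 0 b) (hrel : ∀ ξ ∈ Icc 0 x, K x ξ = S * G x ξ + volterraComp C G x ξ) :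
    volterra K w x = S *ᵥ volterra G w x + volterra C (volterra G w) x := by
  have hKw := intervalIntegrable_kernel_mulVec hK hw hx
  have hGw := intervalIntegrable_kernel_mulVec hG hw hx
  have hSGw : IntervalIntegrable (fun ξ => S *ᵥ (G x ξ *ᵥ w ξ)) volume 0 x :=
    intervalIntegrable_const_mulVec S hGw
  rw [volterra_volterra hC hG hw hx, ← sub_eq_iff_eq_add', volterra, volterra,
    mulVec_intervalIntegral S hGw, ← intervalIntegral.integral_sub hKw hSGw]
  refine intervalIntegral.integral_congr_Ioo_of_le hx.1 fun ξ hξ => ?_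
  simp only [hrel ξ (Ioo_subset_Icc_self hξ), add_mulVec, mulVec_mulVec, add_sub_cancel_left]

end Volterra

section Plant

/-- Coefficients of the plant, with `Λr'` and `Λl'` the entrywise derivatives on `[0, 1]` of the
transport speeds. The speeds `Λʳ = Λr` and `Λˡ = Λl` may be arbitrary square matrices; the index
types `ι` and `κ` of the components of `u` and `v` replace `{1, …, n}` and `{1, …, m}`. -/
structure Plant (ι κ : Type*) where
  (Λr Λr' : ℝ → Matrix ι ι ℝ)
  (Λl Λl' : ℝ → Matrix κ κ ℝ)
  Sr : ℝ → Matrix ι ι ℝ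
  Sl : ℝ → Matrix ι κ ℝ
  So : ℝ → Matrix κ ι ℝ
  Q₀ : Matrix ι κ ℝ
  hasDerivWithinAt_Λr : ∀ x ∈ Icc (0 : ℝ) 1, ∀ i j,
    HasDerivWithinAt (fun y => Λr y i j) (Λr' x i j) (Icc 0 1) x
  hasDerivWithinAt_Λl : ∀ x ∈ Icc (0 : ℝ) 1, ∀ i j,
    HasDerivWithinAt (fun y => Λl y i j) (Λl' x i j) (Icc 0 1) x

/-- The plant with diagonal transport speeds `lr` and `ll`. -/
def Plant.ofDiagonal {ι κ : Type*} [DecidableEq ι] [DecidableEq κ] (lr lr' : ι → ℝ → ℝ)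
    (ll ll' : κ → ℝ → ℝ)
    (hlr : ∀ i, ∀ x ∈ Icc (0 : ℝ) 1, HasDerivWithinAt (lr i) (lr' i x) (Icc 0 1) x)
    (hll : ∀ j, ∀ x ∈ Icc (0 : ℝ) 1, HasDerivWithinAt (ll j) (ll' j x) (Icc 0 1) x)
    (Sr : ℝ → Matrix ι ι ℝ) (Sl : ℝ → Matrix ι κ ℝ) (So : ℝ → Matrix κ ι ℝ) (Q₀ : Matrix ι κ ℝ) :
    Plant ι κ where
  Λr x := diagonal fun i => lr i x
  Λr' x := diagonal fun i => lr' i x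
  Λl x := diagonal fun j => ll j x
  Λl' x := diagonal fun j => ll' j x
  Sr := Sr
  Sl := Sl
  So := So
  Q₀ := Q₀
  hasDerivWithinAt_Λr x hx := hasDerivWithinAt_diagonal_apply fun i => hlr i x hx
  hasDerivWithinAt_Λl x hx := hasDerivWithinAt_diagonal_apply fun j => hll j x hx

/-- A differentiable matrix kernel on the triangle `𝕋`, bundled with its partial derivatives
`dx = ∂ₓ` and `dξ = ∂_ξ`, which are one-sided on the boundary of `𝕋`. -/
structure TriangleKernel (κ ι : Type*) where
  (val dx dξ : ℝ → ℝ → Matrix κ ι ℝ)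
  continuousOn_val : ContinuousOn (Function.uncurry val) (triangle 0 1)
  continuousOn_dx : ContinuousOn (Function.uncurry dx) (triangle 0 1)
  hasDerivWithinAt : ∀ x ξ, 0 ≤ ξ → ξ ≤ x → x ≤ 1 → ∀ i j,
    HasDerivWithinAt (fun y => val y ξ i j) (dx x ξ i j) (Icc ξ 1) x ∧
    HasDerivWithinAt (fun η => val x η i j) (dξ x ξ i j) (Icc 0 x) ξ

/-- A differentiable vector field `(t, x) ↦ val t x` on `[0, ∞) × [0, 1]`, bundled with its partial
derivatives `dt = ∂ₜ` and `dx = ∂ₓ`, which are one-sided on the boundary. -/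
structure StripField (ι : Type*) where
  (val dt dx : ℝ → ℝ → ι → ℝ)
  continuousOn_dt : ContinuousOn (Function.uncurry dt) (Ici 0 ×ˢ Icc 0 1)
  hasDerivWithinAt_dt : ∀ t ∈ Ici (0 : ℝ), ∀ x ∈ Icc (0 : ℝ) 1,
    HasDerivWithinAt (fun s => val s x) (dt t x) (Ici 0) t
  hasDerivWithinAt_dx : ∀ t ∈ Ici (0 : ℝ), ∀ x ∈ Icc (0 : ℝ) 1,
    HasDerivWithinAt (val t) (dx t x) (Icc 0 1) x

variable {ι κ : Type*} {t x ξ : ℝ}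

theorem StripField.continuousOn_dt_apply (w : StripField ι) (ht : t ∈ Ici 0) :
    ContinuousOn (w.dt t) (Icc 0 1) :=
  w.continuousOn_dt.comp (f := fun x => (t, x)) (by fun_prop) fun _ hx => ⟨ht, hx⟩

theorem StripField.continuousOn_val (w : StripField ι) (ht : t ∈ Ici 0) :
    ContinuousOn (w.val t) (Icc 0 1) :=
  continuousOn_pi.2 fun i x hx =>
    (hasDerivWithinAt_pi.1 (w.hasDerivWithinAt_dx t ht x hx) i).continuousWithinAt

variable [Fintype ι] [Fintype κ]

/-- The kernel equations (K1), (K2) with the boundary conditions (B1), (B2); `G₁` and `G₂` are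
`G₂₁` and `G₂₂` of the paper. -/
structure Plant.KernelEquations (P : Plant ι κ) (G₁ : TriangleKernel κ ι)
    (G₂ : TriangleKernel κ κ) : Prop where
  k1 : ∀ x ξ, 0 ≤ ξ → ξ ≤ x → x ≤ 1 → G₁.dξ x ξ * P.Λr ξ - P.Λl x * G₁.dx x ξ
    = -(G₁.val x ξ * P.Λr' ξ) - G₁.val x ξ * P.Sr ξ - G₂.val x ξ * P.So ξ
  k2 : ∀ x ξ, 0 ≤ ξ → ξ ≤ x → x ≤ 1 → G₂.dξ x ξ * P.Λl ξ + P.Λl x * G₂.dx x ξ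
    = -(G₂.val x ξ * P.Λl' ξ) + G₁.val x ξ * P.Sl ξ
  b1 : ∀ x ∈ Icc (0 : ℝ) 1, G₁.val x x * P.Λr x + P.Λl x * G₁.val x x = -P.So x
  b2 : ∀ x ∈ Icc (0 : ℝ) 1, P.Λl x * G₂.val x x = G₂.val x x * P.Λl x

/-- The defining Volterra relations of the integral couplings `Cʳ = Cr` and `Cˡ = Cl` of the target
system. -/
structure Plant.TargetCouplings (P : Plant ι κ) (G₁ : TriangleKernel κ ι)
    (G₂ : TriangleKernel κ κ) (Cr : ℝ → ℝ → Matrix ι ι ℝ) (Cl : ℝ → ℝ → Matrix ι κ ℝ) :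
    Prop where
  continuousOn_Cr : ContinuousOn (Function.uncurry Cr) (triangle 0 1)
  continuousOn_Cl : ContinuousOn (Function.uncurry Cl) (triangle 0 1)
  Cr_eq : ∀ x ξ, 0 ≤ ξ → ξ ≤ x → x ≤ 1 →
    Cr x ξ = P.Sl x * G₁.val x ξ + volterraComp Cl G₁.val x ξ
  Cl_eq : ∀ x ξ, 0 ≤ ξ → ξ ≤ x → x ≤ 1 →
    Cl x ξ = P.Sl x * G₂.val x ξ + volterraComp Cl G₂.val x ξ

/-- `(u, v)` is a classical solution of the plant with the boundary condition at `x = 0`. -/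
structure Plant.IsSolution (P : Plant ι κ) (u : StripField ι) (v : StripField κ) : Prop where
  right : ∀ t ∈ Ici (0 : ℝ), ∀ x ∈ Icc (0 : ℝ) 1,
    u.dt t x + P.Λr x *ᵥ u.dx t x = P.Sr x *ᵥ u.val t x + P.Sl x *ᵥ v.val t x
  left : ∀ t ∈ Ici (0 : ℝ), ∀ x ∈ Icc (0 : ℝ) 1,
    v.dt t x - P.Λl x *ᵥ v.dx t x = P.So x *ᵥ u.val t x
  boundary : ∀ t ∈ Ici (0 : ℝ), u.val t 0 = P.Q₀ *ᵥ v.val t 0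

/-- The backstepping transform `v(x) - ∫₀ˣ [G₁(x, ξ) u(ξ) + G₂(x, ξ) v(ξ)] dξ` of a pair of
profiles on `[0, 1]`. -/
noncomputable def backstep (G₁ : TriangleKernel κ ι) (G₂ : TriangleKernel κ κ) (u : ℝ → ι → ℝ)
    (v : ℝ → κ → ℝ) (x : ℝ) : κ → ℝ :=
  v x - ∫ ξ in (0 : ℝ)..x, (G₁.val x ξ *ᵥ u ξ + G₂.val x ξ *ᵥ v ξ)

/-- The spatial derivative of the backstepping transform of `(u, v)` at time `t`. -/
noncomputable def backstepDx (G₁ : TriangleKernel κ ι) (G₂ : TriangleKernel κ κ)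
    (u : StripField ι) (v : StripField κ) (t x : ℝ) : κ → ℝ :=
  v.dx t x - (G₁.val x x *ᵥ u.val t x + volterra G₁.dx (u.val t) x)
    - (G₂.val x x *ᵥ v.val t x + volterra G₂.dx (v.val t) x)

variable (G₁ : TriangleKernel κ ι) (G₂ : TriangleKernel κ κ)

theorem backstep_zero (u : ℝ → ι → ℝ) (v : ℝ → κ → ℝ) : backstep G₁ G₂ u v 0 = v 0 := by
  rw [backstep, intervalIntegral.integral_same, sub_zero]

theorem backstep_eq_sub_volterra {u : ℝ → ι → ℝ} {v : ℝ → κ → ℝ}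
    (hu : ContinuousOn u (Icc 0 1)) (hv : ContinuousOn v (Icc 0 1)) (hx : x ∈ Icc 0 1) :
    backstep G₁ G₂ u v x = v x - volterra G₁.val u x - volterra G₂.val v x := by
  rw [backstep, intervalIntegral.integral_add
    (intervalIntegrable_kernel_mulVec G₁.continuousOn_val hu hx)
    (intervalIntegrable_kernel_mulVec G₂.continuousOn_val hv hx), ← sub_sub]
  rfl

theorem hasDerivWithinAt_backstep_time (u : StripField ι) (v : StripField κ) (ht : t ∈ Ici 0)
    (hx : x ∈ Icc 0 1) :
    HasDerivWithinAt (fun s => backstep G₁ G₂ (u.val s) (v.val s) x)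
      (backstep G₁ G₂ (u.dt t) (v.dt t) x) (Ici 0) t := by
  have heq : ∀ s ∈ Ici (0 : ℝ), backstep G₁ G₂ (u.val s) (v.val s) x
      = v.val s x - volterra G₁.val (u.val s) x - volterra G₂.val (v.val s) x := fun s hs =>
    backstep_eq_sub_volterra G₁ G₂ (u.continuousOn_val hs) (v.continuousOn_val hs) hx
  have hVu := hasDerivWithinAt_volterra_time G₁.continuousOn_val
    (fun _ hs => u.continuousOn_val hs) u.continuousOn_dt u.hasDerivWithinAt_dt ht hx
  have hVv := hasDerivWithinAt_volterra_time G₂.continuousOn_val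
    (fun _ hs => v.continuousOn_val hs) v.continuousOn_dt v.hasDerivWithinAt_dt ht hx
  rw [backstep_eq_sub_volterra G₁ G₂ (u.continuousOn_dt_apply ht) (v.continuousOn_dt_apply ht) hx]
  exact (((v.hasDerivWithinAt_dt t ht x hx).sub hVu).sub hVv).congr heq (heq t ht)

theorem hasDerivWithinAt_backstep_space (u : StripField ι) (v : StripField κ) (ht : t ∈ Ici 0)
    (hx : x ∈ Icc 0 1) :
    HasDerivWithinAt (backstep G₁ G₂ (u.val t) (v.val t)) (backstepDx G₁ G₂ u v t x)
      (Icc 0 1) x := by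
  have hu := u.continuousOn_val ht
  have hv := v.continuousOn_val ht
  have hVu := hasDerivWithinAt_volterra G₁.continuousOn_val G₁.continuousOn_dx
    (fun y ξ h0 h1 h2 i j => (G₁.hasDerivWithinAt y ξ h0 h1 h2 i j).1) hu hx
  have hVv := hasDerivWithinAt_volterra G₂.continuousOn_val G₂.continuousOn_dx
    (fun y ξ h0 h1 h2 i j => (G₂.hasDerivWithinAt y ξ h0 h1 h2 i j).1) hv hx
  exact (((v.hasDerivWithinAt_dx t ht x hx).sub hVu).sub hVv).congr
    (fun _ hy => backstep_eq_sub_volterra G₁ G₂ hu hv hy)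
    (backstep_eq_sub_volterra G₁ G₂ hu hv hx)

variable {G₁ G₂} {P : Plant ι κ} {u : StripField ι} {v : StripField κ}

theorem Plant.TargetCouplings.mulVec_eq {Cr : ℝ → ℝ → Matrix ι ι ℝ} {Cl : ℝ → ℝ → Matrix ι κ ℝ}
    (hC : P.TargetCouplings G₁ G₂ Cr Cl) {u : ℝ → ι → ℝ} {v : ℝ → κ → ℝ}
    (hu : ContinuousOn u (Icc 0 1)) (hv : ContinuousOn v (Icc 0 1)) (hx : x ∈ Icc 0 1) :
    P.Sl x *ᵥ v x
      = P.Sl x *ᵥ backstep G₁ G₂ u v x + volterra Cr u x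
        + volterra Cl (backstep G₁ G₂ u v) x := by
  have hsub : Icc 0 x ⊆ Icc 0 1 := Icc_subset_Icc_right hx.2
  have hGu := continuousOn_volterra G₁.continuousOn_val hu
  have hGv := continuousOn_volterra G₂.continuousOn_val hv
  have hCr : volterra Cr u x
      = P.Sl x *ᵥ volterra G₁.val u x + volterra Cl (volterra G₁.val u) x :=
    volterra_eq_of_resolvent_relation hC.continuousOn_Cr hC.continuousOn_Cl G₁.continuousOn_val hu
      hx fun ξ hξ => hC.Cr_eq x ξ hξ.1 hξ.2 hx.2
  have hCl : volterra Cl v x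
      = P.Sl x *ᵥ volterra G₂.val v x + volterra Cl (volterra G₂.val v) x :=
    volterra_eq_of_resolvent_relation hC.continuousOn_Cl hC.continuousOn_Cl G₂.continuousOn_val hv
      hx fun ξ hξ => hC.Cl_eq x ξ hξ.1 hξ.2 hx.2
  have hClβ : volterra Cl (backstep G₁ G₂ u v) x
      = volterra Cl v x - volterra Cl (volterra G₁.val u) x
        - volterra Cl (volterra G₂.val v) x := by
    rw [volterra_congr hx.1 fun ξ hξ => backstep_eq_sub_volterra G₁ G₂ hu hv (hsub hξ),
      volterra_sub (w := fun ξ => v ξ - volterra G₁.val u ξ) hC.continuousOn_Cl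
        (hv.sub hGu) hGv hx,
      volterra_sub hC.continuousOn_Cl hv hGu hx]
  rw [hClβ, hCr, hCl, backstep_eq_sub_volterra G₁ G₂ hu hv hx, mulVec_sub, mulVec_sub]
  abel

/-- The flux `ξ ↦ G₁(x, ξ) Λʳ(ξ) u(t, ξ) - G₂(x, ξ) Λˡ(ξ) v(t, ξ)` of `(u, v)` weighted by the row
`(G₁, G₂)` of kernels, whose `ξ`-derivative collects the interior terms of `∂ₜβ - Λˡ ∂ₓβ`. -/
def Plant.flux (P : Plant ι κ) (G₁ : TriangleKernel κ ι) (G₂ : TriangleKernel κ κ)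
    (u : StripField ι) (v : StripField κ) (t x ξ : ℝ) : κ → ℝ :=
  G₁.val x ξ *ᵥ (P.Λr ξ *ᵥ u.val t ξ) - G₂.val x ξ *ᵥ (P.Λl ξ *ᵥ v.val t ξ)

theorem hasDerivWithinAt_flux (hG : P.KernelEquations G₁ G₂) (huv : P.IsSolution u v)
    (ht : t ∈ Ici 0) (hx : x ≤ 1) (hξ : ξ ∈ Icc 0 x) :
    HasDerivWithinAt (P.flux G₁ G₂ u v t x)
      (P.Λl x *ᵥ (G₁.dx x ξ *ᵥ u.val t ξ + G₂.dx x ξ *ᵥ v.val t ξ)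
        - (G₁.val x ξ *ᵥ u.dt t ξ + G₂.val x ξ *ᵥ v.dt t ξ)) (Icc 0 x) ξ := by
  have hsub : Icc 0 x ⊆ Icc 0 1 := Icc_subset_Icc_right hx
  have hξ' := hsub hξ
  have hright := hasDerivWithinAt_mulVec
    (fun i j => (G₁.hasDerivWithinAt x ξ hξ.1 hξ.2 hx i j).2)
    ((hasDerivWithinAt_mulVec (P.hasDerivWithinAt_Λr ξ hξ')
      (u.hasDerivWithinAt_dx t ht ξ hξ')).mono hsub)
  have hleft := hasDerivWithinAt_mulVec
    (fun i j => (G₂.hasDerivWithinAt x ξ hξ.1 hξ.2 hx i j).2)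
    ((hasDerivWithinAt_mulVec (P.hasDerivWithinAt_Λl ξ hξ')
      (v.hasDerivWithinAt_dx t ht ξ hξ')).mono hsub)
  refine (hright.sub hleft).congr_deriv ?_
  have hk1 := congrArg (· *ᵥ u.val t ξ) (hG.k1 x ξ hξ.1 hξ.2 hx)
  have hk2 := congrArg (· *ᵥ v.val t ξ) (hG.k2 x ξ hξ.1 hξ.2 hx)
  have hu := congrArg (G₁.val x ξ *ᵥ ·) (huv.right t ht ξ hξ')
  have hv := congrArg (G₂.val x ξ *ᵥ ·) (huv.left t ht ξ hξ')
  simp only [sub_mulVec, add_mulVec, neg_mulVec, mulVec_add, mulVec_sub, ← mulVec_mulVec]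
    at hk1 hk2 hu hv ⊢
  linear_combination (exp := 1) hk1 - hk2 + hu + hv

theorem mulVec_volterra_dx_sub_volterra_dt (hG : P.KernelEquations G₁ G₂)
    (huv : P.IsSolution u v) (ht : t ∈ Ici 0) (hx : x ∈ Icc 0 1) :
    P.Λl x *ᵥ (volterra G₁.dx (u.val t) x + volterra G₂.dx (v.val t) x)
        - (volterra G₁.val (u.dt t) x + volterra G₂.val (v.dt t) x)
      = P.flux G₁ G₂ u v t x x - P.flux G₁ G₂ u v t x 0 := by
  have hdxu := intervalIntegrable_kernel_mulVec G₁.continuousOn_dx (u.continuousOn_val ht) hx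
  have hdxv := intervalIntegrable_kernel_mulVec G₂.continuousOn_dx (v.continuousOn_val ht) hx
  have hdtu := intervalIntegrable_kernel_mulVec G₁.continuousOn_val (u.continuousOn_dt_apply ht) hx
  have hdtv := intervalIntegrable_kernel_mulVec G₂.continuousOn_val (v.continuousOn_dt_apply ht) hx
  have hΛ : IntervalIntegrable (fun ξ => P.Λl x *ᵥ
      (G₁.dx x ξ *ᵥ u.val t ξ + G₂.dx x ξ *ᵥ v.val t ξ)) volume 0 x :=
    intervalIntegrable_const_mulVec _ (hdxu.add hdxv)
  rw [← integral_eq_sub_of_hasDerivWithinAt hx.1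
      (fun ξ hξ => hasDerivWithinAt_flux hG huv ht hx.2 hξ) (hΛ.sub (hdtu.add hdtv)),
    intervalIntegral.integral_sub hΛ (hdtu.add hdtv), intervalIntegral.integral_add hdtu hdtv,
    ← mulVec_intervalIntegral _ (hdxu.add hdxv), intervalIntegral.integral_add hdxu hdxv]
  rfl

theorem backstep_dt_sub_mulVec_backstepDx (hG : P.KernelEquations G₁ G₂)
    (huv : P.IsSolution u v) (ht : t ∈ Ici 0) (hx : x ∈ Icc 0 1) :
    backstep G₁ G₂ (u.dt t) (v.dt t) x - P.Λl x *ᵥ backstepDx G₁ G₂ u v t x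
      = (G₂.val x 0 * P.Λl 0 - G₁.val x 0 * P.Λr 0 * P.Q₀) *ᵥ v.val t 0 := by
  have hflux := mulVec_volterra_dx_sub_volterra_dt hG huv ht hx
  have hb1 := congrArg (· *ᵥ u.val t x) (hG.b1 x hx)
  have hb2 := congrArg (· *ᵥ v.val t x) (hG.b2 x hx)
  have hplant := huv.left t ht x hx
  rw [backstep_eq_sub_volterra G₁ G₂ (u.continuousOn_dt_apply ht) (v.continuousOn_dt_apply ht) hx]
  simp only [Plant.flux, backstepDx, huv.boundary t ht, sub_mulVec, add_mulVec, neg_mulVec,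
    mulVec_add, mulVec_sub, ← mulVec_mulVec] at hflux hb1 hb2 ⊢
  linear_combination (exp := 1) hflux + hb1 + hb2 + hplant

end Plant

end Backstepping

open Backstepping in
theorem backstepping_transformation_maps_plant_to_target_general {ι κ : Type*} [Fintype ι]
    [Fintype κ] (P : Plant ι κ) (G₁ : TriangleKernel κ ι) (G₂ : TriangleKernel κ κ)
    (hG : P.KernelEquations G₁ G₂) (Cr : ℝ → ℝ → Matrix ι ι ℝ) (Cl : ℝ → ℝ → Matrix ι κ ℝ)
    (hC : P.TargetCouplings G₁ G₂ Cr Cl) (u : StripField ι) (v : StripField κ)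
    (huv : P.IsSolution u v) :
    ∃ βt βx : ℝ → ℝ → κ → ℝ,
      (∀ t ∈ Ici (0 : ℝ), ∀ x ∈ Icc (0 : ℝ) 1,
        HasDerivWithinAt (fun s => backstep G₁ G₂ (u.val s) (v.val s) x) (βt t x) (Ici 0) t ∧
        HasDerivWithinAt (backstep G₁ G₂ (u.val t) (v.val t)) (βx t x) (Icc 0 1) x) ∧
      (∀ t ∈ Ici (0 : ℝ), ∀ x ∈ Icc (0 : ℝ) 1,
        u.dt t x + P.Λr x *ᵥ u.dx t x
          = P.Sr x *ᵥ u.val t x + P.Sl x *ᵥ backstep G₁ G₂ (u.val t) (v.val t) x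
            + volterra Cr (u.val t) x + volterra Cl (backstep G₁ G₂ (u.val t) (v.val t)) x) ∧
      (∀ t ∈ Ici (0 : ℝ), ∀ x ∈ Icc (0 : ℝ) 1,
        βt t x - P.Λl x *ᵥ βx t x
          = (G₂.val x 0 * P.Λl 0 - G₁.val x 0 * P.Λr 0 * P.Q₀)
            *ᵥ backstep G₁ G₂ (u.val t) (v.val t) 0) ∧
      (∀ t ∈ Ici (0 : ℝ), u.val t 0 = P.Q₀ *ᵥ backstep G₁ G₂ (u.val t) (v.val t) 0) := by
  refine ⟨fun t => backstep G₁ G₂ (u.dt t) (v.dt t), backstepDx G₁ G₂ u v,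
    fun t ht x hx => ⟨hasDerivWithinAt_backstep_time G₁ G₂ u v ht hx,
      hasDerivWithinAt_backstep_space G₁ G₂ u v ht hx⟩, fun t ht x hx => ?_,
    fun t ht x hx => ?_, fun t ht => ?_⟩
  · rw [huv.right t ht x hx,
      hC.mulVec_eq (u.continuousOn_val ht) (v.continuousOn_val ht) hx]
    abel
  · rw [backstep_zero, backstep_dt_sub_mulVec_backstepDx hG huv ht hx]
  · rw [backstep_zero, huv.boundary t ht]

theorem backstepping_transformation_maps_plant_to_target
    (n m : ℕ)
    (lr lr' : Fin n → ℝ → ℝ) (ll ll' : Fin m → ℝ → ℝ)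
    (hlrC1 : ∀ i, ContDiffOn ℝ 1 (lr i) (Icc 0 1))
    (hllC1 : ∀ j, ContDiffOn ℝ 1 (ll j) (Icc 0 1))
    (hlr' : ∀ i, ∀ x ∈ Icc (0:ℝ) 1, HasDerivWithinAt (lr i) (lr' i x) (Icc 0 1) x)
    (hll' : ∀ j, ∀ x ∈ Icc (0:ℝ) 1, HasDerivWithinAt (ll j) (ll' j x) (Icc 0 1) x)
    (hlrpos : ∀ i, ∀ x ∈ Icc (0:ℝ) 1, 0 < lr i x)
    (hllpos : ∀ j, ∀ x ∈ Icc (0:ℝ) 1, 0 < ll j x)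
    (Sr : ℝ → Matrix (Fin n) (Fin n) ℝ) (Sl : ℝ → Matrix (Fin n) (Fin m) ℝ)
    (So : ℝ → Matrix (Fin m) (Fin n) ℝ)
    (hSrc : ContinuousOn Sr (Icc 0 1)) (hSlc : ContinuousOn Sl (Icc 0 1))
    (hSoc : ContinuousOn So (Icc 0 1))
    (Q0 : Matrix (Fin n) (Fin m) ℝ)
    (G21 G21x G21xi : ℝ → ℝ → Matrix (Fin m) (Fin n) ℝ)
    (G22 G22x G22xi : ℝ → ℝ → Matrix (Fin m) (Fin m) ℝ)
    -- the kernels are C¹ on the triangle 𝕋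
    (hG21c : ContinuousOn (fun p : ℝ × ℝ => G21 p.1 p.2)
      {p : ℝ × ℝ | 0 ≤ p.2 ∧ p.2 ≤ p.1 ∧ p.1 ≤ 1})
    (hG22c : ContinuousOn (fun p : ℝ × ℝ => G22 p.1 p.2)
      {p : ℝ × ℝ | 0 ≤ p.2 ∧ p.2 ≤ p.1 ∧ p.1 ≤ 1})
    (hG21xc : ContinuousOn (fun p : ℝ × ℝ => G21x p.1 p.2)
      {p : ℝ × ℝ | 0 ≤ p.2 ∧ p.2 ≤ p.1 ∧ p.1 ≤ 1})
    (hG21xic : ContinuousOn (fun p : ℝ × ℝ => G21xi p.1 p.2)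
      {p : ℝ × ℝ | 0 ≤ p.2 ∧ p.2 ≤ p.1 ∧ p.1 ≤ 1})
    (hG22xc : ContinuousOn (fun p : ℝ × ℝ => G22x p.1 p.2)
      {p : ℝ × ℝ | 0 ≤ p.2 ∧ p.2 ≤ p.1 ∧ p.1 ≤ 1})
    (hG22xic : ContinuousOn (fun p : ℝ × ℝ => G22xi p.1 p.2)
      {p : ℝ × ℝ | 0 ≤ p.2 ∧ p.2 ≤ p.1 ∧ p.1 ≤ 1})
    (hG21d : ∀ x ξ : ℝ, 0 ≤ ξ → ξ ≤ x → x ≤ 1 → ∀ (i : Fin m) (j : Fin n),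
      HasDerivWithinAt (fun y => G21 y ξ i j) (G21x x ξ i j) (Icc ξ 1) x ∧
      HasDerivWithinAt (fun η => G21 x η i j) (G21xi x ξ i j) (Icc 0 x) ξ)
    (hG22d : ∀ x ξ : ℝ, 0 ≤ ξ → ξ ≤ x → x ≤ 1 → ∀ (i : Fin m) (j : Fin m),
      HasDerivWithinAt (fun y => G22 y ξ i j) (G22x x ξ i j) (Icc ξ 1) x ∧
      HasDerivWithinAt (fun η => G22 x η i j) (G22xi x ξ i j) (Icc 0 x) ξ)
    -- the kernel equations (K1), (K2)
    (hK1 : ∀ x ξ : ℝ, 0 ≤ ξ → ξ ≤ x → x ≤ 1 →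
      G21xi x ξ * Matrix.diagonal (fun i => lr i ξ)
        - Matrix.diagonal (fun j => ll j x) * G21x x ξ
      = -(G21 x ξ * Matrix.diagonal fun i => lr' i ξ)
        - G21 x ξ * Sr ξ - G22 x ξ * So ξ)
    (hK2 : ∀ x ξ : ℝ, 0 ≤ ξ → ξ ≤ x → x ≤ 1 →
      G22xi x ξ * Matrix.diagonal (fun j => ll j ξ)
        + Matrix.diagonal (fun j => ll j x) * G22x x ξ
      = -(G22 x ξ * Matrix.diagonal fun j => ll' j ξ) + G21 x ξ * Sl ξ)
    -- the boundary conditions (B1), (B2)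
    (hB1 : ∀ x ∈ Icc (0:ℝ) 1,
      G21 x x * Matrix.diagonal (fun i => lr i x)
        + Matrix.diagonal (fun j => ll j x) * G21 x x = -(So x))
    (hB2 : ∀ x ∈ Icc (0:ℝ) 1,
      Matrix.diagonal (fun j => ll j x) * G22 x x
        = G22 x x * Matrix.diagonal (fun j => ll j x))
    -- the kernels Cʳ, Cˡ and their defining Volterra relations
    (Cr : ℝ → ℝ → Matrix (Fin n) (Fin n) ℝ) (Cl : ℝ → ℝ → Matrix (Fin n) (Fin m) ℝ)
    (hCrc : ContinuousOn (fun p : ℝ × ℝ => Cr p.1 p.2)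
      {p : ℝ × ℝ | 0 ≤ p.2 ∧ p.2 ≤ p.1 ∧ p.1 ≤ 1})
    (hClc : ContinuousOn (fun p : ℝ × ℝ => Cl p.1 p.2)
      {p : ℝ × ℝ | 0 ≤ p.2 ∧ p.2 ≤ p.1 ∧ p.1 ≤ 1})
    (hCrrel : ∀ x ξ : ℝ, 0 ≤ ξ → ξ ≤ x → x ≤ 1 →
      Cr x ξ = Sl x * G21 x ξ
        + Matrix.of (fun i j => ∫ η in ξ..x, (Cl x η * G21 η ξ) i j))
    (hClrel : ∀ x ξ : ℝ, 0 ≤ ξ → ξ ≤ x → x ≤ 1 →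
      Cl x ξ = Sl x * G22 x ξ
        + Matrix.of (fun i j => ∫ η in ξ..x, (Cl x η * G22 η ξ) i j))
    -- a classical C¹ solution (u, v) of the plant system
    (u ut ux : ℝ → ℝ → Fin n → ℝ) (v vt vx : ℝ → ℝ → Fin m → ℝ)
    (huc : ContinuousOn (fun p : ℝ × ℝ => u p.1 p.2) (Ici 0 ×ˢ Icc 0 1))
    (hvc : ContinuousOn (fun p : ℝ × ℝ => v p.1 p.2) (Ici 0 ×ˢ Icc 0 1))
    (hutc : ContinuousOn (fun p : ℝ × ℝ => ut p.1 p.2) (Ici 0 ×ˢ Icc 0 1))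
    (huxc : ContinuousOn (fun p : ℝ × ℝ => ux p.1 p.2) (Ici 0 ×ˢ Icc 0 1))
    (hvtc : ContinuousOn (fun p : ℝ × ℝ => vt p.1 p.2) (Ici 0 ×ˢ Icc 0 1))
    (hvxc : ContinuousOn (fun p : ℝ × ℝ => vx p.1 p.2) (Ici 0 ×ˢ Icc 0 1))
    (hderiv : ∀ t ∈ Ici (0:ℝ), ∀ x ∈ Icc (0:ℝ) 1,
      HasDerivWithinAt (fun s => u s x) (ut t x) (Ici 0) t ∧
      HasDerivWithinAt (fun y => u t y) (ux t x) (Icc 0 1) x ∧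
      HasDerivWithinAt (fun s => v s x) (vt t x) (Ici 0) t ∧
      HasDerivWithinAt (fun y => v t y) (vx t x) (Icc 0 1) x)
    (hplant1 : ∀ t ∈ Ici (0:ℝ), ∀ x ∈ Icc (0:ℝ) 1,
      ut t x + (Matrix.diagonal fun i => lr i x).mulVec (ux t x)
        = (Sr x).mulVec (u t x) + (Sl x).mulVec (v t x))
    (hplant2 : ∀ t ∈ Ici (0:ℝ), ∀ x ∈ Icc (0:ℝ) 1,
      vt t x - (Matrix.diagonal fun j => ll j x).mulVec (vx t x)
        = (So x).mulVec (u t x))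
    (hbc0 : ∀ t ∈ Ici (0:ℝ), u t 0 = Q0.mulVec (v t 0))
    -- the backstepping transformation: ε := u and β as below
    (ε : ℝ → ℝ → Fin n → ℝ) (β : ℝ → ℝ → Fin m → ℝ)
    (hεdef : ∀ t x : ℝ, ε t x = u t x)
    (hβdef : ∀ t x : ℝ, β t x = v t x
      - ∫ ξ in (0:ℝ)..x, ((G21 x ξ).mulVec (u t ξ) + (G22 x ξ).mulVec (v t ξ))) :
    -- (ε, β) is a classical solution of the target system
    ∃ βt βx : ℝ → ℝ → Fin m → ℝ,
      (∀ t ∈ Ici (0:ℝ), ∀ x ∈ Icc (0:ℝ) 1,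
        HasDerivWithinAt (fun s => β s x) (βt t x) (Ici 0) t ∧
        HasDerivWithinAt (fun y => β t y) (βx t x) (Icc 0 1) x) ∧
      (∀ t ∈ Ici (0:ℝ), ∀ x ∈ Icc (0:ℝ) 1,
        ut t x + (Matrix.diagonal fun i => lr i x).mulVec (ux t x)
          = (Sr x).mulVec (ε t x) + (Sl x).mulVec (β t x)
            + (∫ ξ in (0:ℝ)..x, (Cr x ξ).mulVec (ε t ξ))
            + ∫ ξ in (0:ℝ)..x, (Cl x ξ).mulVec (β t ξ)) ∧
      (∀ t ∈ Ici (0:ℝ), ∀ x ∈ Icc (0:ℝ) 1,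
        βt t x - (Matrix.diagonal fun j => ll j x).mulVec (βx t x)
          = ((G22 x 0 * Matrix.diagonal (fun j' => ll j' 0)
              - G21 x 0 * Matrix.diagonal (fun i' => lr i' 0) * Q0)).mulVec (β t 0)) ∧
      (∀ t ∈ Ici (0:ℝ), ε t 0 = Q0.mulVec (β t 0)) := by
  obtain rfl : ε = u := funext₂ hεdef
  obtain rfl : β = _ := funext₂ hβdef
  exact backstepping_transformation_maps_plant_to_target_general
    (.ofDiagonal lr lr' ll ll' hlr' hll' Sr Sl So Q0)
    ⟨G21, G21x, G21xi, hG21c, hG21xc, hG21d⟩ ⟨G22, G22x, G22xi, hG22c, hG22xc, hG22d⟩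
    ⟨hK1, hK2, hB1, hB2⟩ Cr Cl ⟨hCrc, hClc, hCrrel, hClrel⟩
    ⟨ε, ut, ux, hutc, fun t ht x hx => (hderiv t ht x hx).1,
      fun t ht x hx => (hderiv t ht x hx).2.1⟩
    ⟨v, vt, vx, hvtc, fun t ht x hx => (hderiv t ht x hx).2.2.1,
      fun t ht x hx => (hderiv t ht x hx).2.2.2⟩
    ⟨hplant1, hplant2, hbc0⟩
end

section
/- Bound on the Volterra double-integral term: Let n, p ≥ 1, ν > 0, M > 0, let K: 𝕋 → ℝ^{n×p} be continuous with ‖K(x,ξ)‖ ≤ M for all (x,ξ) ∈ 𝕋 (‖·‖ the matrix 2-norm), and let a ∈ C([0,1]; ℝⁿ), b ∈ C([0,1]; ℝᵖ). Then | ∫₀¹ e^{−νx} a(x)ᵀ ( ∫₀ˣ K(x,ξ) b(ξ) dξ ) dx | ≤ (M/2) ( ∫₀¹ e^{−νx} |a(x)|² dx + (1/ν) ∫₀¹ |b(ξ)|² dξ ). -/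
open MeasureTheory Set Matrix Real

/-- The operator (matrix 2-) norm of a real matrix, i.e. the operator norm of the
induced linear map between Euclidean spaces. -/
noncomputable def l2OpNorm {m n : ℕ} (A : Matrix (Fin m) (Fin n) ℝ) : ℝ :=
  ‖LinearMap.toContinuousLinearMap
    (Matrix.toEuclideanLin A : EuclideanSpace ℝ (Fin n) →ₗ[ℝ] EuclideanSpace ℝ (Fin m))‖

/-!
By Cauchy–Schwarz and AM-GM, `|⟪a x, K x ξ (b ξ)⟫| ≤ (M / 2) (‖a x‖² + ‖b ξ‖²)` on the triangle.
Integrating over `ξ ∈ (0, x)` multiplies the first term by `x ≤ T` and bounds the second one by the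
full integral of `‖b‖²`, which no longer depends on `x`. Integrating against the weight `e^{-νx}`
therefore multiplies the second term by `∫₀ᵀ e^{-νx} dx ≤ 1 / ν`.
-/

section Sections

variable {α β : Type*} [MeasurableSpace α] [MeasurableSpace β] {μ : Measure α} {ν : Measure β}
  [SFinite ν] {S : Set (α × β)}

theorem ae_ae_restrict_of_ae_restrict_prod {P : α × β → Prop} (hS : MeasurableSet S)
    (h : ∀ᵐ q ∂(μ.prod ν).restrict S, P q) :
    ∀ᵐ x ∂μ, ∀ᵐ y ∂ν.restrict (Prod.mk x ⁻¹' S), P (x, y) := by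
  filter_upwards [Measure.ae_ae_of_ae_prod ((ae_restrict_iff' hS).1 h)] with x hx
  exact (ae_restrict_iff' (measurable_prodMk_left hS)).2 hx

theorem ae_aestronglyMeasurable_section_of_restrict {X : Type*} [TopologicalSpace X]
    {f : α × β → X} (hS : MeasurableSet S)
    (hf : AEStronglyMeasurable f ((μ.prod ν).restrict S)) :
    ∀ᵐ x ∂μ, AEStronglyMeasurable (fun y => f (x, y)) (ν.restrict (Prod.mk x ⁻¹' S)) := by
  filter_upwards [ae_ae_restrict_of_ae_restrict_prod hS hf.ae_eq_mk] with x hx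
  exact ⟨_, hf.stronglyMeasurable_mk.comp_measurable measurable_prodMk_left, hx⟩

end Sections

theorem memLp_restrict_of_continuousOn_of_isCompact {X E : Type*} [TopologicalSpace X]
    [TopologicalSpace.PseudoMetrizableSpace X] [MeasurableSpace X] [OpensMeasurableSpace X]
    [NormedAddCommGroup E] {μ : Measure X} [IsFiniteMeasureOnCompacts μ] {f : X → E} {S : Set X}
    (hf : ContinuousOn f S) (hS : IsCompact S) (hS_meas : MeasurableSet S) (p : ENNReal) :
    MemLp f p (μ.restrict S) := by
  obtain ⟨C, hC⟩ := hS.exists_bound_of_continuousOn hf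
  have : IsFiniteMeasure (μ.restrict S) := isFiniteMeasure_restrict.2 hS.measure_lt_top.ne
  exact .of_bound (hf.aestronglyMeasurable_of_isCompact hS hS_meas) C
    (ae_restrict_of_forall_mem hS_meas hC)

theorem integral_exp_neg_mul_le {ν : ℝ} (hν : 0 < ν) (T : ℝ) :
    ∫ x in (0:ℝ)..T, Real.exp (-ν * x) ≤ 1 / ν := by
  rw [intervalIntegral.integral_comp_mul_left _ (neg_ne_zero.2 hν.ne'), integral_exp, mul_zero,
    Real.exp_zero, smul_eq_mul]
  calc (-ν)⁻¹ * (Real.exp (-ν * T) - 1) = (1 - Real.exp (-ν * T)) / ν := by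
        rw [inv_neg]; ring
    _ ≤ 1 / ν := by gcongr; linarith [Real.exp_pos (-ν * T)]

section VolterraTriangle

/-- The triangle `0 ≤ ξ ≤ x ≤ T` of pairs `(x, ξ)` on which a Volterra kernel on `[0, T]` lives;
the paper's `𝕋` is `volterraTriangle 1`. -/
def volterraTriangle (T : ℝ) : Set (ℝ × ℝ) :=
  {q | 0 ≤ q.2 ∧ q.2 ≤ q.1 ∧ q.1 ≤ T}

theorem isClosed_volterraTriangle (T : ℝ) : IsClosed (volterraTriangle T) :=
  (isClosed_le continuous_const continuous_snd).inter
    ((isClosed_le continuous_snd continuous_fst).inter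
      (isClosed_le continuous_fst continuous_const))

theorem measurableSet_volterraTriangle (T : ℝ) : MeasurableSet (volterraTriangle T) :=
  (isClosed_volterraTriangle T).measurableSet

theorem Ioc_subset_preimage_volterraTriangle {T x : ℝ} (hx : x ≤ T) :
    Ioc 0 x ⊆ Prod.mk x ⁻¹' volterraTriangle T :=
  fun _ hξ => ⟨hξ.1.le, hξ.2, hx⟩

end VolterraTriangle

section Operator

variable {E F : Type*} [NormedAddCommGroup E] [InnerProductSpace ℝ E]
  [NormedAddCommGroup F] [NormedSpace ℝ F] {M : ℝ}

theorem abs_inner_clm_apply_le {L : F →L[ℝ] E} (hL : ‖L‖ ≤ M) (u : E) (v : F) :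
    |inner ℝ u (L v)| ≤ M / 2 * (‖u‖ ^ 2 + ‖v‖ ^ 2) := by
  have hM : 0 ≤ M := (norm_nonneg L).trans hL
  calc |inner ℝ u (L v)| ≤ ‖u‖ * ‖L v‖ := abs_real_inner_le_norm u (L v)
    _ ≤ ‖u‖ * (M * ‖v‖) := by gcongr; exact L.le_of_opNorm_le hL v
    _ = M / 2 * (2 * ‖u‖ * ‖v‖) := by ring
    _ ≤ M / 2 * (‖u‖ ^ 2 + ‖v‖ ^ 2) := by gcongr; exact two_mul_le_add_sq ‖u‖ ‖v‖

variable [CompleteSpace E]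

theorem abs_inner_integral_clm_apply_le {α : Type*} [MeasurableSpace α] {μ : Measure α}
    [IsFiniteMeasure μ] {L : α → F →L[ℝ] E} {b : α → F} (hL : AEStronglyMeasurable L μ)
    (hLM : ∀ᵐ ξ ∂μ, ‖L ξ‖ ≤ M) (hb : MemLp b 2 μ) (u : E) :
    |inner ℝ u (∫ ξ, L ξ (b ξ) ∂μ)| ≤ M / 2 * (μ.real univ * ‖u‖ ^ 2 + ∫ ξ, ‖b ξ‖ ^ 2 ∂μ) := by
  have hb_sq : Integrable (fun ξ => ‖b ξ‖ ^ 2) μ := hb.integrable_norm_pow two_ne_zero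
  have hLb : Integrable (fun ξ => L ξ (b ξ)) μ := by
    refine ((hb.integrable one_le_two).norm.const_mul M).mono'
      ((ContinuousLinearMap.id ℝ _).aestronglyMeasurable_comp₂ hL hb.1) ?_
    filter_upwards [hLM] with ξ hξ using (L ξ).le_of_opNorm_le hξ (b ξ)
  calc |inner ℝ u (∫ ξ, L ξ (b ξ) ∂μ)| = ‖∫ ξ, inner ℝ u (L ξ (b ξ)) ∂μ‖ := by
        rw [integral_inner hLb, Real.norm_eq_abs]
    _ ≤ ∫ ξ, M / 2 * (‖u‖ ^ 2 + ‖b ξ‖ ^ 2) ∂μ := by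
        refine norm_integral_le_of_norm_le (((integrable_const _).add hb_sq).const_mul _) ?_
        filter_upwards [hLM] with ξ hξ using abs_inner_clm_apply_le hξ u (b ξ)
    _ = M / 2 * (μ.real univ * ‖u‖ ^ 2 + ∫ ξ, ‖b ξ‖ ^ 2 ∂μ) := by
        rw [integral_const_mul, integral_add (integrable_const _) hb_sq, integral_const,
          smul_eq_mul]

variable {T : ℝ} {K : ℝ → ℝ → F →L[ℝ] E} {a : ℝ → E} {b : ℝ → F}

theorem ae_abs_inner_volterra_le (hM : 0 ≤ M)
    (hK : AEStronglyMeasurable (fun q : ℝ × ℝ => K q.1 q.2)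
      (volume.restrict (volterraTriangle T)))
    (hKM : ∀ᵐ q ∂volume.restrict (volterraTriangle T), ‖K q.1 q.2‖ ≤ M)
    (hb : MemLp b 2 (volume.restrict (Ioc 0 T))) :
    ∀ᵐ x, x ∈ Ioc 0 T → ∀ u : E, |inner ℝ u (∫ ξ in (0:ℝ)..x, K x ξ (b ξ))|
      ≤ M / 2 * (T * ‖u‖ ^ 2 + ∫ ξ in (0:ℝ)..T, ‖b ξ‖ ^ 2) := by
  filter_upwards
    [ae_aestronglyMeasurable_section_of_restrict (measurableSet_volterraTriangle T) hK,
      ae_ae_restrict_of_ae_restrict_prod (measurableSet_volterraTriangle T) hKM]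
    with x hKx hKMx hx u
  have h_restrict :
      volume.restrict (Ioc 0 x) ≤ volume.restrict (Prod.mk x ⁻¹' volterraTriangle T) :=
    Measure.restrict_mono (Ioc_subset_preimage_volterraTriangle hx.2) le_rfl
  have hIoc : Ioc 0 x ⊆ Ioc 0 T := Ioc_subset_Ioc_right hx.2
  have h_section : |inner ℝ u (∫ ξ in Ioc 0 x, K x ξ (b ξ))|
      ≤ M / 2 * (x * ‖u‖ ^ 2 + ∫ ξ in Ioc 0 x, ‖b ξ‖ ^ 2) := by
    simpa [hx.1.le] using abs_inner_integral_clm_apply_le (hKx.mono_measure h_restrict)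
      (ae_mono h_restrict hKMx) (hb.mono_measure (Measure.restrict_mono hIoc le_rfl)) u
  rw [intervalIntegral.integral_of_le hx.1.le, intervalIntegral.integral_of_le (hx.1.le.trans hx.2)]
  refine h_section.trans ?_
  gcongr
  · exact hx.2
  · exact .of_forall fun ξ => sq_nonneg ‖b ξ‖
  · exact hb.integrable_norm_pow two_ne_zero

theorem abs_integral_weight_mul_inner_volterra_le {w : ℝ → ℝ} (hT : 0 ≤ T) (hM : 0 ≤ M)
    (hw : ∀ x ∈ Ioc 0 T, 0 ≤ w x) (hw_int : IntervalIntegrable w volume 0 T)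
    (hK : AEStronglyMeasurable (fun q : ℝ × ℝ => K q.1 q.2)
      (volume.restrict (volterraTriangle T)))
    (hKM : ∀ᵐ q ∂volume.restrict (volterraTriangle T), ‖K q.1 q.2‖ ≤ M)
    (ha : IntervalIntegrable (fun x => w x * ‖a x‖ ^ 2) volume 0 T)
    (hb : MemLp b 2 (volume.restrict (Ioc 0 T))) :
    |∫ x in (0:ℝ)..T, w x * inner ℝ (a x) (∫ ξ in (0:ℝ)..x, K x ξ (b ξ))|
      ≤ M / 2 * (T * (∫ x in (0:ℝ)..T, w x * ‖a x‖ ^ 2)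
          + (∫ x in (0:ℝ)..T, w x) * ∫ ξ in (0:ℝ)..T, ‖b ξ‖ ^ 2) := by
  set B : ℝ := ∫ ξ in (0:ℝ)..T, ‖b ξ‖ ^ 2
  have h_int : IntervalIntegrable (fun x => T * (w x * ‖a x‖ ^ 2) + w x * B) volume 0 T :=
    (ha.const_mul T).add (hw_int.mul_const B)
  have h_bound : ∀ᵐ x, x ∈ Ioc 0 T →
      ‖w x * inner ℝ (a x) (∫ ξ in (0:ℝ)..x, K x ξ (b ξ))‖
        ≤ M / 2 * (T * (w x * ‖a x‖ ^ 2) + w x * B) := by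
    filter_upwards [ae_abs_inner_volterra_le hM hK hKM hb] with x h_inner hx
    rw [norm_mul, Real.norm_of_nonneg (hw x hx), Real.norm_eq_abs]
    calc w x * |inner ℝ (a x) (∫ ξ in (0:ℝ)..x, K x ξ (b ξ))|
        ≤ w x * (M / 2 * (T * ‖a x‖ ^ 2 + B)) :=
          mul_le_mul_of_nonneg_left (h_inner hx (a x)) (hw x hx)
      _ = M / 2 * (T * (w x * ‖a x‖ ^ 2) + w x * B) := by ring
  refine (intervalIntegral.norm_integral_le_of_norm_le hT h_bound (h_int.const_mul _)).trans_eq ?_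
  rw [intervalIntegral.integral_const_mul,
    intervalIntegral.integral_add (ha.const_mul T) (hw_int.mul_const B),
    intervalIntegral.integral_const_mul, intervalIntegral.integral_mul_const]

theorem volterra_double_integral_bound_general {ν : ℝ} (hT : 0 ≤ T) (hν : 0 < ν) (hM : 0 ≤ M)
    (hK : AEStronglyMeasurable (fun q : ℝ × ℝ => K q.1 q.2)
      (volume.restrict (volterraTriangle T)))
    (hKM : ∀ᵐ q ∂volume.restrict (volterraTriangle T), ‖K q.1 q.2‖ ≤ M)
    (ha : MemLp a 2 (volume.restrict (Ioc 0 T))) (hb : MemLp b 2 (volume.restrict (Ioc 0 T))) :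
    |∫ x in (0:ℝ)..T, Real.exp (-ν * x) * inner ℝ (a x) (∫ ξ in (0:ℝ)..x, K x ξ (b ξ))|
      ≤ M / 2 * (T * (∫ x in (0:ℝ)..T, Real.exp (-ν * x) * ‖a x‖ ^ 2)
          + (1 / ν) * ∫ ξ in (0:ℝ)..T, ‖b ξ‖ ^ 2) := by
  have h_exp : Continuous fun x : ℝ => Real.exp (-ν * x) := by fun_prop
  have ha_sq : IntervalIntegrable (fun x => ‖a x‖ ^ 2) volume 0 T :=
    (intervalIntegrable_iff_integrableOn_Ioc_of_le hT).2 (ha.integrable_norm_pow two_ne_zero)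
  refine (abs_integral_weight_mul_inner_volterra_le hT hM (fun x _ => (Real.exp_pos (-ν * x)).le)
    (h_exp.intervalIntegrable 0 T) hK hKM (ha_sq.continuousOn_mul h_exp.continuousOn) hb).trans ?_
  gcongr
  · exact intervalIntegral.integral_nonneg hT fun ξ _ => sq_nonneg ‖b ξ‖
  · exact integral_exp_neg_mul_le hν T

end Operator

section EuclideanSpace

variable {m n : Type*} [Fintype m] [Fintype n]

theorem intervalIntegral_toLp (f : ℝ → n → ℝ) (s t : ℝ) :
    ∫ ξ in s..t, WithLp.toLp 2 (f ξ) = WithLp.toLp 2 (∫ ξ in s..t, f ξ) := by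
  have h_comm (S : Set ℝ) :
      ∫ ξ in S, WithLp.toLp 2 (f ξ) = WithLp.toLp 2 (∫ ξ in S, f ξ) :=
    (EuclideanSpace.equiv n ℝ).symm.integral_comp_comm f
  rw [intervalIntegral, intervalIntegral, h_comm, h_comm, WithLp.toLp_sub]

variable [DecidableEq n]

/-- The operator between Euclidean spaces given by a rectangular real matrix, as a linear function
of the matrix. Mathlib's `Matrix.toEuclideanCLM` covers square matrices only. -/
noncomputable def euclideanCLM :
    Matrix m n ℝ →ₗ[ℝ] EuclideanSpace ℝ n →L[ℝ] EuclideanSpace ℝ m :=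
  LinearMap.toContinuousLinearMap.toLinearMap ∘ₗ Matrix.toEuclideanLin.toLinearMap

theorem euclideanCLM_toLp (A : Matrix m n ℝ) (v : n → ℝ) :
    euclideanCLM A (WithLp.toLp 2 v) = WithLp.toLp 2 (A *ᵥ v) :=
  Matrix.toLpLin_toLp 2 2 A v

theorem continuous_euclideanCLM :
    Continuous (euclideanCLM : Matrix m n ℝ → EuclideanSpace ℝ n →L[ℝ] EuclideanSpace ℝ m) :=
  LinearMap.continuous_of_finiteDimensional (E := Matrix m n ℝ) euclideanCLM

theorem norm_euclideanCLM {k l : ℕ} (A : Matrix (Fin k) (Fin l) ℝ) :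
    ‖euclideanCLM A‖ = l2OpNorm A :=
  rfl

theorem dotProduct_intervalIntegral_mulVec (u : m → ℝ) (A : ℝ → Matrix m n ℝ) (v : ℝ → n → ℝ)
    (s t : ℝ) :
    u ⬝ᵥ ∫ ξ in s..t, A ξ *ᵥ v ξ
      = inner ℝ (WithLp.toLp 2 u) (∫ ξ in s..t, euclideanCLM (A ξ) (WithLp.toLp 2 (v ξ))) := by
  simp only [euclideanCLM_toLp, intervalIntegral_toLp, EuclideanSpace.inner_toLp_toLp, star_trivial,
    dotProduct_comm]

end EuclideanSpace

theorem volterra_double_integral_bound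
    (n p : ℕ) (hn : 1 ≤ n) (hp : 1 ≤ p)
    (ν M : ℝ) (hν : 0 < ν) (hM : 0 < M)
    (K : ℝ → ℝ → Matrix (Fin n) (Fin p) ℝ)
    (hKc : ContinuousOn (fun q : ℝ × ℝ => K q.1 q.2)
      {q : ℝ × ℝ | 0 ≤ q.2 ∧ q.2 ≤ q.1 ∧ q.1 ≤ 1})
    (hKM : ∀ x ξ : ℝ, 0 ≤ ξ → ξ ≤ x → x ≤ 1 → l2OpNorm (K x ξ) ≤ M)
    (a : ℝ → Fin n → ℝ) (b : ℝ → Fin p → ℝ)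
    (ha : ContinuousOn a (Icc 0 1)) (hb : ContinuousOn b (Icc 0 1)) :
    |∫ x in (0:ℝ)..1, Real.exp (-ν * x) *
        (a x ⬝ᵥ ∫ ξ in (0:ℝ)..x, (K x ξ).mulVec (b ξ))|
      ≤ (M / 2) * ((∫ x in (0:ℝ)..1, Real.exp (-ν * x) * ∑ i, (a x i) ^ 2)
          + (1 / ν) * ∫ ξ in (0:ℝ)..1, ∑ j, (b ξ j) ^ 2) := by
  have hK_meas : AEStronglyMeasurable (fun q : ℝ × ℝ => euclideanCLM (K q.1 q.2))
      (volume.restrict (volterraTriangle 1)) :=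
    (continuous_euclideanCLM.comp_continuousOn hKc).aestronglyMeasurable
      (measurableSet_volterraTriangle 1)
  have hK_le : ∀ᵐ q ∂volume.restrict (volterraTriangle 1), ‖euclideanCLM (K q.1 q.2)‖ ≤ M :=
    ae_restrict_of_forall_mem (measurableSet_volterraTriangle 1) fun q hq =>
      (norm_euclideanCLM _).trans_le (hKM q.1 q.2 hq.1 hq.2.1 hq.2.2)
  have memLp_toLp {k : ℕ} {c : ℝ → Fin k → ℝ} (hc : ContinuousOn c (Icc 0 1)) :
      MemLp (fun x => WithLp.toLp 2 (c x)) 2 (volume.restrict (Ioc (0:ℝ) 1)) :=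
    (memLp_restrict_of_continuousOn_of_isCompact ((PiLp.continuous_toLp 2 _).comp_continuousOn hc)
      isCompact_Icc measurableSet_Icc 2).mono_measure
        (Measure.restrict_mono Ioc_subset_Icc_self le_rfl)
  simpa only [dotProduct_intervalIntegral_mulVec, EuclideanSpace.real_norm_sq_eq, one_mul] using
    volterra_double_integral_bound_general (K := fun x ξ => euclideanCLM (K x ξ))
      zero_le_one hν hM.le hK_meas hK_le (memLp_toLp ha) (memLp_toLp hb)
end
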